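/- Let n ≥ 2 and let C ⊆ S^n be solid. Suppose there exist p ∈ ℝ^{n+1} and t ∈ ℝ with |t| < ‖p‖ such that every strongly regular boundary point x of C satisfies ⟨p,x⟩ = t. Then C is a closed geodesic ball: there exist z ∈ S^n and r ∈ (0,π) with C = B(z,r). -/

import Mathlib

/-!
The strongly regular boundary points of a solid set `C` are dense in `∂C`: near `x ∈ ∂C` there is an
interior point `y`, and a point of the closure of `Cᶜ` nearest to `y` is a strongly regular boundary
point at distance at most `d(x,y)` from `y` (`frontier_subset`). Hence `∂C` lies in the closed set
`{⟨p,x⟩ = t}`, which is the geodesic sphere of radius `R = arccos (t/‖p‖) ∈ (0,π)` about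
`z = p/‖p‖`. Its complement consists of two open geodesic balls, centred at `z` and `-z`. Both are
connected and miss `∂C`, so each lies inside `C` or inside `Cᶜ`. Not both lie in `C`, since `C` is
closed and is not the whole sphere, and not both lie in `Cᶜ`, since the geodesic sphere has empty
interior. The one inside `C` has `C` as its closure.

All the geometry comes from `exists_geodesic`, which joins a point to a centre along a great circle.
-/

open MeasureTheory

noncomputable section

/-- Euclidean space `ℝ^{n+1}`. -/
abbrev Esp (n : ℕ) : Type := EuclideanSpace ℝ (Fin (n + 1))

/-- The unit sphere `S^n ⊆ ℝ^{n+1}`, as a subtype. -/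
abbrev Sph (n : ℕ) : Type := Metric.sphere (0 : Esp n) 1

/-- Geodesic distance `d(x,y) = arccos ⟨x,y⟩` on the sphere. -/
def gd {n : ℕ} (x y : Sph n) : ℝ :=
  Real.arccos (inner (𝕜 := ℝ) (x : Esp n) (y : Esp n))

/-- Closed geodesic ball `B(z,r) = {x ∈ Sⁿ : d(x,z) ≤ r}`. -/
def sphBall {n : ℕ} (z : Sph n) (r : ℝ) : Set (Sph n) := {x | gd x z ≤ r}

/-- Geodesic diameter `diam X = sup {d(x,y) : x, y ∈ X}`. -/
def sphDiam {n : ℕ} (X : Set (Sph n)) : ℝ :=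
  sSup {r | ∃ x ∈ X, ∃ y ∈ X, r = gd x y}

/-- Spherical volume: the `n`-dimensional (Hausdorff) surface measure on `S^n`. -/
def sphVol (n : ℕ) : Measure (Sph n) := μH[(n : ℝ)]

/-- A nonempty compact set `C ⊆ S^n`, `C ≠ S^n`, is solid if it equals the closure
of its interior (in the topology of `S^n`). -/
def Solid {n : ℕ} (C : Set (Sph n)) : Prop :=
  C.Nonempty ∧ IsCompact C ∧ C ≠ Set.univ ∧ C = closure (interior C)

/-- `x` is a strongly regular boundary point of `C`: `x ∈ ∂C` and there are `r > 0`
and `z ∈ C` with `B(z,r) ⊆ C` and `d(x,z) = r`. -/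
def StronglyRegular {n : ℕ} (C : Set (Sph n)) (x : Sph n) : Prop :=
  x ∈ frontier C ∧ ∃ r > 0, ∃ z ∈ C, sphBall z r ⊆ C ∧ gd x z = r

section SphereCap

variable {n : ℕ}

lemma exists_unit_orthogonal (hn : 2 ≤ n) (e : Sph n) :
    ∃ u : Esp n, ‖u‖ = 1 ∧ inner ℝ (e : Esp n) u = 0 := by
  have h1 : 0 < Module.finrank ℝ (ℝ ∙ (e : Esp n))ᗮ := by
    have h := Submodule.finrank_add_finrank_orthogonal (ℝ ∙ (e : Esp n))
    have h2 : Module.finrank ℝ (ℝ ∙ (e : Esp n)) ≤ 1 := by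
      simpa using finrank_span_le_card (R := ℝ) ({(e : Esp n)} : Set (Esp n))
    have h3 : Module.finrank ℝ (Esp n) = n + 1 := by simp
    omega
  have : Nontrivial (ℝ ∙ (e : Esp n))ᗮ := Module.nontrivial_of_finrank_pos h1
  obtain ⟨u, hu⟩ := exists_norm_eq (ℝ ∙ (e : Esp n))ᗮ (zero_le_one (α := ℝ))
  exact ⟨u, hu, Submodule.mem_orthogonal_singleton_iff_inner_right.1 u.2⟩

/-- Every point `x` lies on a great circle through `e`, parametrized by the angle from `e`;
for `x = ± e` the direction of the circle is arbitrary. -/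
lemma exists_geodesic (hn : 2 ≤ n) (e x : Sph n) :
    ∃ γ : ℝ → Sph n, Continuous γ ∧ γ 0 = e ∧ γ (gd x e) = x ∧
      ∀ θ ∈ Set.Icc 0 Real.pi, gd (γ θ) e = θ := by
  set a : ℝ := inner ℝ (x : Esp n) (e : Esp n) with ha
  have hx : ‖(x : Esp n)‖ = 1 := by simp
  have he : ‖(e : Esp n)‖ = 1 := by simp
  have habs : |a| ≤ 1 := by simpa [hx, he] using abs_real_inner_le_norm (x : Esp n) (e : Esp n)
  obtain ⟨hal, har⟩ := abs_le.1 habs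
  have hee : inner ℝ (e : Esp n) (e : Esp n) = (1 : ℝ) := by
    rw [real_inner_self_eq_norm_sq, he]; norm_num
  have hxx : inner ℝ (x : Esp n) (x : Esp n) = (1 : ℝ) := by
    rw [real_inner_self_eq_norm_sq, hx]; norm_num
  have hex : inner ℝ (e : Esp n) (x : Esp n) = a := real_inner_comm _ _
  -- the component of `x` orthogonal to `e` has squared norm `1 - a ^ 2`
  have hw : ‖(x : Esp n) - a • (e : Esp n)‖ ^ 2 = 1 - a ^ 2 := by
    rw [← real_inner_self_eq_norm_sq]
    simp only [inner_sub_left, inner_sub_right, inner_smul_left, inner_smul_right, hee, hxx, hex,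
      ← ha]
    simp; ring
  obtain ⟨u, hu, heu, hxu⟩ : ∃ u : Esp n, ‖u‖ = 1 ∧ inner ℝ (e : Esp n) u = 0 ∧
      (x : Esp n) = a • (e : Esp n) + √(1 - a ^ 2) • u := by
    by_cases h : (x : Esp n) - a • (e : Esp n) = 0
    · obtain ⟨u, hu, heu⟩ := exists_unit_orthogonal hn e
      refine ⟨u, hu, heu, ?_⟩
      rw [← hw, h]
      simpa [sub_eq_zero] using h
    · have hs : √(1 - a ^ 2) = ‖(x : Esp n) - a • (e : Esp n)‖ := by
        rw [← hw, Real.sqrt_sq (norm_nonneg _)]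
      have hne := norm_ne_zero_iff.2 h
      refine ⟨‖(x : Esp n) - a • (e : Esp n)‖⁻¹ • ((x : Esp n) - a • (e : Esp n)), ?_, ?_, ?_⟩
      · rw [norm_smul, norm_inv, norm_norm, inv_mul_cancel₀ hne]
      · rw [inner_smul_right, inner_sub_right, inner_smul_right, hee, hex]; ring
      · rw [hs, smul_smul, mul_inv_cancel₀ hne]; simp
  have huu : inner ℝ u u = (1 : ℝ) := by rw [real_inner_self_eq_norm_sq, hu]; norm_num
  have hue : inner ℝ u (e : Esp n) = (0 : ℝ) := by rw [real_inner_comm]; exact heu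
  have hnorm : ∀ θ : ℝ, Real.cos θ • (e : Esp n) + Real.sin θ • u ∈
      Metric.sphere (0 : Esp n) 1 := by
    intro θ
    have h : ‖Real.cos θ • (e : Esp n) + Real.sin θ • u‖ ^ 2 = 1 := by
      rw [← real_inner_self_eq_norm_sq]
      simp only [inner_add_left, inner_add_right, inner_smul_left, inner_smul_right, hee, heu, hue,
        huu]
      simp
      nlinarith [Real.sin_sq_add_cos_sq θ]
    rw [mem_sphere_zero_iff_norm]
    exact (pow_eq_one_iff_of_nonneg (norm_nonneg _) two_ne_zero).1 h
  refine ⟨fun θ => ⟨_, hnorm θ⟩, ?_, ?_, ?_, ?_⟩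
  · exact Continuous.subtype_mk (by fun_prop) _
  · ext1; simp
  · ext1
    simp only [gd, ← ha]
    rw [Real.cos_arccos hal har, Real.sin_arccos, ← hxu]
  · intro θ hθ
    simp only [gd, inner_add_left, inner_smul_left, hee, hue]
    simpa using Real.arccos_cos hθ.1 hθ.2

lemma gd_nonneg (x y : Sph n) : 0 ≤ gd x y := Real.arccos_nonneg _

lemma gd_le_pi (x y : Sph n) : gd x y ≤ Real.pi := Real.arccos_le_pi _

lemma gd_neg (x y : Sph n) : gd x (-y) = Real.pi - gd x y := by
  simp [gd, Real.arccos_neg]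

lemma continuous_gd (y : Sph n) : Continuous fun x : Sph n => gd x y := by
  unfold gd
  exact Real.continuous_arccos.comp (by fun_prop)

lemma gd_self (y : Sph n) : gd y y = 0 := by
  have : ‖(y : Esp n)‖ = 1 := by simp
  simp [gd, this]

lemma eq_of_gd_eq_zero {x y : Sph n} (h : gd x y = 0) : x = y := by
  have hx : ‖(x : Esp n)‖ = 1 := by simp
  have hy : ‖(y : Esp n)‖ = 1 := by simp
  have h1 : (1 : ℝ) ≤ inner ℝ (x : Esp n) (y : Esp n) := Real.arccos_eq_zero.1 h
  have h2 := real_inner_le_norm (x : Esp n) (y : Esp n)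
  rw [hx, hy] at h2
  ext1
  exact (inner_eq_one_iff_of_norm_eq_one (𝕜 := ℝ) hx hy).1 (by linarith)

/-- The geodesic distance controls the topology: a small open geodesic ball about `x` fits into any
neighbourhood of `x`, because `‖y - x‖² = 2 - 2 cos d(y,x) ≤ d(y,x)²`. -/
lemma exists_gd_lt_subset {x : Sph n} {U : Set (Sph n)} (hU : U ∈ nhds x) :
    ∃ ε > 0, ∀ y, gd y x < ε → y ∈ U := by
  obtain ⟨δ, hδ, hδU⟩ := Metric.mem_nhds_iff.1 hU
  refine ⟨δ, hδ, fun y hy => hδU ?_⟩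
  have hx : ‖(x : Esp n)‖ = 1 := by simp
  have hyn : ‖(y : Esp n)‖ = 1 := by simp
  have habs := abs_real_inner_le_norm (y : Esp n) (x : Esp n)
  rw [hx, hyn, one_mul] at habs
  have hcos : Real.cos (gd y x) = inner ℝ (y : Esp n) (x : Esp n) :=
    Real.cos_arccos (abs_le.1 habs).1 (abs_le.1 habs).2
  have h1 := Real.one_sub_sq_div_two_le_cos (x := gd y x)
  have h2 := norm_sub_sq_real (y : Esp n) (x : Esp n)
  rw [hx, hyn] at h2
  have h3 : ‖(y : Esp n) - x‖ ≤ gd y x :=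
    le_of_sq_le_sq (by nlinarith) (gd_nonneg _ _)
  rw [Metric.mem_ball, Subtype.dist_eq, dist_eq_norm]
  linarith

/-- Sliding along the geodesic towards `y` brings a point of the closed ball into the open one. -/
lemma mem_closure_open_ball (hn : 2 ≤ n) {v y : Sph n} {r : ℝ} (hr : 0 < r) (hv : gd v y ≤ r) :
    v ∈ closure {x : Sph n | gd x y < r} := by
  rcases hv.lt_or_eq with h | h
  · exact subset_closure h
  obtain ⟨γ, hγ, -, hγv, hγd⟩ := exists_geodesic hn y v
  rw [h] at hγv
  have hπ : r ≤ Real.pi := h ▸ gd_le_pi v y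
  have hcl : r ∈ closure (Set.Ico 0 r) := by
    rw [closure_Ico hr.ne]; exact ⟨hr.le, le_rfl⟩
  rw [← hγv]
  refine map_mem_closure hγ hcl fun θ hθ => ?_
  rw [Set.mem_ofPred_eq, hγd θ ⟨hθ.1, hθ.2.le.trans hπ⟩]
  exact hθ.2

lemma isPreconnected_open_ball (hn : 2 ≤ n) (y : Sph n) (r : ℝ) :
    IsPreconnected {x : Sph n | gd x y < r} := by
  refine isPreconnected_of_forall y fun v hv => ?_
  obtain ⟨γ, hγ, hγ0, hγv, hγd⟩ := exists_geodesic hn y v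
  have hnn := gd_nonneg v y
  refine ⟨γ '' Set.Icc 0 (gd v y), ?_, ⟨0, ⟨le_rfl, hnn⟩, hγ0⟩, ⟨_, ⟨hnn, le_rfl⟩, hγv⟩,
    isPreconnected_Icc.image _ hγ.continuousOn⟩
  rintro _ ⟨θ, hθ, rfl⟩
  rw [Set.mem_ofPred_eq, hγd θ ⟨hθ.1, hθ.2.trans (gd_le_pi _ _)⟩]
  exact hθ.2.trans_lt hv

/-- The largest open ball about an interior point `y` of `C` that avoids the closure of `Cᶜ` touches
`∂C` at a strongly regular point, which is no farther from `y` than any boundary point `x`. -/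
lemma exists_stronglyRegular (hn : 2 ≤ n) {C : Set (Sph n)} (hC : IsClosed C) {x y : Sph n}
    (hx : x ∈ frontier C) (hy : y ∈ interior C) :
    ∃ w, StronglyRegular C w ∧ gd w y ≤ gd x y := by
  have hxK : x ∈ closure Cᶜ := (frontier_eq_closure_inter_closure (s := C) ▸ hx).2
  obtain ⟨w, hwK, hmin⟩ := isClosed_closure.isCompact.exists_isMinOn ⟨x, hxK⟩
    (continuous_gd y).continuousOn (s := closure Cᶜ)
  have hwpos : 0 < gd w y := by
    refine (gd_nonneg w y).lt_of_ne fun h => ?_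
    rw [closure_compl, eq_of_gd_eq_zero h.symm] at hwK
    exact hwK hy
  have hball : sphBall y (gd w y) ⊆ C := by
    have hopen : {v : Sph n | gd v y < gd w y} ⊆ C := by
      intro v hv
      by_contra hvC
      have h : gd w y ≤ gd v y := hmin (subset_closure hvC)
      exact absurd h (not_le.2 hv)
    intro v hv
    exact closure_minimal hopen hC (mem_closure_open_ball hn hwpos hv)
  refine ⟨w, ⟨?_, gd w y, hwpos, y, interior_subset hy, hball, rfl⟩, hmin hxK⟩
  rw [frontier_eq_closure_inter_closure]
  exact ⟨subset_closure (hball (le_refl (gd w y))), hwK⟩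

lemma gd_comm (x y : Sph n) : gd x y = gd y x := by
  simp only [gd, real_inner_comm]

lemma gd_triangle (x y z : Sph n) : gd x z ≤ gd x y + gd y z := by
  have h := InnerProductGeometry.angle_le_angle_add_angle (x : Esp n) (y : Esp n) (z : Esp n)
  simpa [InnerProductGeometry.angle, gd] using h

/-- Strongly regular points are dense in the boundary of a solid set. -/
lemma frontier_subset (hn : 2 ≤ n) {C F : Set (Sph n)} (hC : Solid C) (hF : IsClosed F)
    (hreg : ∀ x, StronglyRegular C x → x ∈ F) : frontier C ⊆ F := by
  obtain ⟨-, hcomp, -, hcl⟩ := hC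
  intro x hx
  rw [← hF.closure_eq, mem_closure_iff_nhds]
  intro U hU
  obtain ⟨ε, hε, hεU⟩ := exists_gd_lt_subset hU
  have hxC : x ∈ closure (interior C) := hcl ▸ hcomp.isClosed.frontier_subset hx
  have hnear : {y : Sph n | gd y x < ε / 2} ∈ nhds x :=
    (isOpen_lt (continuous_gd x) continuous_const).mem_nhds
      (by rw [Set.mem_ofPred_eq, gd_self]; linarith)
  obtain ⟨y, hyx, hy⟩ := mem_closure_iff_nhds.1 hxC _ hnear
  obtain ⟨w, hw, hwy⟩ := exists_stronglyRegular hn hcomp.isClosed hx hy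
  refine ⟨w, hεU w ?_, hreg w hw⟩
  have h1 := gd_triangle w y x
  rw [gd_comm x y] at hwy
  have h2 : gd y x < ε / 2 := hyx
  linarith

lemma eq_sphBall (hn : 2 ≤ n) {C : Set (Sph n)} (hC : IsClosed C) {z : Sph n} {r : ℝ} (hr : 0 < r)
    (hin : {x : Sph n | gd x z < r} ⊆ C) (hout : {x : Sph n | r < gd x z} ⊆ Cᶜ) :
    C = sphBall z r := by
  refine Set.Subset.antisymm (fun x hx => ?_) fun x hx =>
    closure_minimal hin hC (mem_closure_open_ball hn hr hx)
  by_contra h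
  exact hout (not_le.1 h : r < gd x z) hx

end SphereCap

/-- if all strongly regular boundary points of a solid set lie in a fixed
hyperplane section `{x : ⟨p,x⟩ = t}` with `|t| < ‖p‖`, then the set is a closed geodesic ball. -/
theorem solid_with_regular_points_on_sphere_cap_is_ball (n : ℕ) (hn : 2 ≤ n)
    (C : Set (Sph n)) (hC : Solid C) (p : Esp n) (t : ℝ) (hpt : |t| < ‖p‖)
    (hreg : ∀ x : Sph n, StronglyRegular C x → inner (𝕜 := ℝ) p (x : Esp n) = t) :
    ∃ z : Sph n, ∃ r : ℝ, 0 < r ∧ r < Real.pi ∧ C = sphBall z r := by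
  have hp : 0 < ‖p‖ := (abs_nonneg t).trans_lt hpt
  obtain ⟨htl, htr⟩ := abs_lt.1 hpt
  let z : Sph n := ⟨‖p‖⁻¹ • p, by
    rw [mem_sphere_zero_iff_norm, norm_smul, norm_inv, norm_norm, inv_mul_cancel₀ hp.ne']⟩
  set R : ℝ := Real.arccos (t / ‖p‖) with hR
  have hR0 : 0 < R := Real.arccos_pos.2 ((div_lt_one hp).2 htr)
  have hRπ : R < Real.pi := by
    refine (Real.arccos_le_pi _).lt_of_ne fun h => ?_
    have := Real.arccos_eq_pi.1 h
    rw [div_le_iff₀ hp] at this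
    linarith
  have hfr : frontier C ⊆ {x | gd x z = R} := by
    refine frontier_subset hn hC (isClosed_eq (continuous_gd z) continuous_const) fun x hx => ?_
    have h := hreg x hx
    rw [Set.mem_ofPred_eq, hR, gd]
    congr 1
    change inner ℝ (x : Esp n) (‖p‖⁻¹ • p) = t / ‖p‖
    rw [inner_smul_right, real_inner_comm, h, div_eq_inv_mul]
  obtain ⟨hne, hcomp, huniv, hcl⟩ := hC
  have hopp : {x : Sph n | gd x (-z) < Real.pi - R} = {x | R < gd x z} := by
    ext x; simp only [Set.mem_ofPred_eq, gd_neg]; constructor <;> intro h <;> linarith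
  have hopp' : {x : Sph n | Real.pi - R < gd x (-z)} = {x | gd x z < R} := by
    ext x; simp only [Set.mem_ofPred_eq, gd_neg]; constructor <;> intro h <;> linarith
  have key : ∀ U : Set (Sph n), IsPreconnected U → (∀ x ∈ U, gd x z ≠ R) → U ⊆ C ∨ U ⊆ Cᶜ := by
    intro U hU hUR
    by_contra! h
    obtain ⟨h1, h2⟩ := h
    obtain ⟨a, haU, ha⟩ := Set.not_subset.1 h1
    obtain ⟨b, hbU, hb⟩ := Set.not_subset.1 h2
    have hint : ∀ x ∈ U, x ∈ C → x ∈ interior C := by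
      intro x hxU hxC
      by_contra hxi
      exact hUR x hxU (hfr (hcomp.isClosed.frontier_eq ▸ ⟨hxC, hxi⟩))
    obtain ⟨x, -, hx, hx'⟩ := hU (interior C) Cᶜ isOpen_interior hcomp.isClosed.isOpen_compl
      (fun x hxU => (em (x ∈ C)).imp (hint x hxU) id) ⟨b, hbU, hint b hbU (not_not.1 hb)⟩
      ⟨a, haU, ha⟩
    exact hx' (interior_subset hx)
  have hU := key {x | gd x z < R} (isPreconnected_open_ball hn z R) fun x hx => ne_of_lt hx
  have hV := key {x | R < gd x z} (hopp ▸ isPreconnected_open_ball hn (-z) (Real.pi - R))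
    fun x hx => ne_of_gt hx
  rcases hU with hU | hU <;> rcases hV with hV | hV
  · -- both open balls inside `C`: then `C` is the whole sphere
    refine absurd (Set.eq_univ_of_forall fun x => ?_) huniv
    rcases le_or_gt (gd x z) R with h | h
    · exact closure_minimal hU hcomp.isClosed (mem_closure_open_ball hn hR0 h)
    · exact hV h
  · exact ⟨z, R, hR0, hRπ, eq_sphBall hn hcomp.isClosed hR0 hU hV⟩
  · exact ⟨-z, Real.pi - R, by linarith, by linarith,
      eq_sphBall hn hcomp.isClosed (by linarith) (hopp ▸ hV) (hopp' ▸ hU)⟩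
  · -- both open balls outside `C`: then the interior of `C` lies on a sphere of empty interior
    exfalso
    obtain ⟨y, hy⟩ : (interior C).Nonempty := closure_nonempty_iff.1 (hcl ▸ hne)
    have hyR : gd y z ≤ R := not_lt.1 fun h => hV h (interior_subset hy)
    obtain ⟨v, hvC, hv⟩ := mem_closure_iff.1 (mem_closure_open_ball hn hR0 hyR) _
      isOpen_interior hy
    exact hU hv (interior_subset hvC)
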